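/- Let A be an invertible (m+n)×(m+n) matrix over ℒ with distance function F_A, let λ₁,…,λ_{m+n} be the successive minima of F_A, and let σ₁,…,σ_{m+n} be the successive minima of the polar distance function F_A^*(y) = sup_{x ≠ 0} ‖x·y‖ / F_A(x). Then λ_m σ_{n+1} = 1. -/

import Mathlib

/-!
Common setup: the field `ℒ = 𝔽((X⁻¹))` of formal Laurent series with coefficients
in a finite field `𝔽` of `k` elements.  We realize `ℒ` as `LaurentSeries 𝔽`
(Hahn series over `ℤ`) in the variable `T = X⁻¹`, so that `X` corresponds to `T⁻¹`
and the polynomial ring `𝔽[X]` corresponds to series supported on nonpositive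
exponents.  The absolute value of `x = Σ_{i ≤ N} a_i X^i` (with `a_N ≠ 0`) is
`k^N`, i.e. `k^(-order x)` in terms of the `T`-adic order.
-/

open scoped Classical ENNReal NNReal
open MeasureTheory

noncomputable section

namespace FSBad

/-- The field `ℒ = 𝔽((X⁻¹))`. -/
abbrev L (𝔽 : Type) [Field 𝔽] : Type := LaurentSeries 𝔽

variable {𝔽 : Type} [Field 𝔽] [Fintype 𝔽]

/-- The absolute value `‖·‖` on `ℒ`: `‖x‖ = k^(deg_X x)`, `‖0‖ = 0`. -/
def lnorm (x : L 𝔽) : ℝ := if x = 0 then 0 else (Fintype.card 𝔽 : ℝ) ^ (-x.order)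

/-- Membership in the polynomial ring `𝔽[X] ⊆ ℒ` (polynomials in `X = T⁻¹`). -/
def IsPoly (x : L 𝔽) : Prop := ∀ i : ℤ, 0 < i → x.coeff i = 0

/-- The height (sup-norm) `‖·‖_∞` on `ℒ^ι`. -/
def vnorm {ι : Type*} (x : ι → L 𝔽) : ℝ := ⨆ i, lnorm (x i)

/-- The closed ball in `ℒ^ι` with centre `c` and radius `ρ`. -/
def vball {ι : Type*} (c : ι → L 𝔽) (ρ : ℝ) : Set (ι → L 𝔽) :=
  {x | vnorm (fun i => x i - c i) ≤ ρ}

/-- `m × n` matrices over `ℒ`, identified with `ℒ^(mn)`. -/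
abbrev Mat (𝔽 : Type) [Field 𝔽] (m n : ℕ) : Type := Matrix (Fin m) (Fin n) (L 𝔽)

/-- The height of a matrix, i.e. the sup-norm on `ℒ^(mn)`. -/
def mnorm {m n : ℕ} (A : Mat 𝔽 m n) : ℝ := ⨆ p : Fin m × Fin n, lnorm (A p.1 p.2)

/-- The closed ball in `ℒ^(mn)` with centre `c` and radius `ρ`. -/
def mball {m n : ℕ} (c : Mat 𝔽 m n) (ρ : ℝ) : Set (Mat 𝔽 m n) :=
  {A | mnorm (A - c) ≤ ρ}

/-- The distance `⟨x⟩` from `x ∈ ℒ^h` to the polynomial lattice `𝔽[X]^h`. -/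
def latDist {h : ℕ} (x : Fin h → L 𝔽) : ℝ :=
  sInf {r : ℝ | ∃ p : Fin h → L 𝔽, (∀ i, IsPoly (p i)) ∧ r = vnorm (fun i => x i - p i)}

/-- The set `𝔅(m,n)` of badly approximable systems of `m` linear forms in `n`
variables over `ℒ`. -/
def Bad (𝔽 : Type) [Field 𝔽] [Fintype 𝔽] (m n : ℕ) : Set (Mat 𝔽 m n) :=
  {A | ∃ K : ℝ, 0 < K ∧ ∀ q : Fin m → L 𝔽, (∀ i, IsPoly (q i)) → q ≠ 0 →
    latDist (Matrix.vecMul q A) ^ n > K / vnorm q ^ m}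

/-- The Hausdorff `s`-measure of `E ⊆ ℒ^(mn)`, defined through countable covers by
balls of radii `< δ`, letting `δ → 0` (the infimum over `δ`-covers is nonincreasing
in `δ`, so the limit is the supremum over `δ > 0`). -/
def hMeasure {m n : ℕ} (s : ℝ) (E : Set (Mat 𝔽 m n)) : ℝ≥0∞ :=
  ⨆ (δ : ℝ) (_ : 0 < δ),
    ⨅ (c : ℕ → Mat 𝔽 m n) (ρ : ℕ → ℝ) (_ : ∀ i, 0 < ρ i ∧ ρ i < δ)
      (_ : E ⊆ ⋃ i, mball (c i) (ρ i)), ∑' i, ENNReal.ofReal (ρ i ^ s)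

/-- The Hausdorff dimension of `E ⊆ ℒ^(mn)`. -/
def hdim {m n : ℕ} (E : Set (Mat 𝔽 m n)) : ℝ :=
  sInf {s : ℝ | 0 ≤ s ∧ hMeasure s E = 0}

/-! ### Schmidt `(α,β)`-games on `ℒ^(mn)` -/

/-- A formal ball: an element of `Ω = ℒ^(mn) × ℝ`. -/
structure FBall (𝔽 : Type) [Field 𝔽] (m n : ℕ) where
  /-- centre -/
  c : Mat 𝔽 m n
  /-- radius -/
  r : ℝ

/-- Formal inclusion of formal balls: `(c₁,ρ₁) ⊆ (c₂,ρ₂)` iff `ρ₁ + ‖c₁ - c₂‖_∞ ≤ ρ₂`. -/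
def FBall.ssub {m n : ℕ} (B₁ B₂ : FBall 𝔽 m n) : Prop :=
  B₁.r + mnorm (B₁.c - B₂.c) ≤ B₂.r

/-- The subset of `ℒ^(mn)` determined by a formal ball. -/
def FBall.toSet {m n : ℕ} (B : FBall 𝔽 m n) : Set (Mat 𝔽 m n) := mball B.c B.r

/-- A strategy for White: given the balls `B₁, …, B_{i+1}` chosen by Black so far,
produce White's next ball. -/
abbrev Strategy (𝔽 : Type) [Field 𝔽] (m n : ℕ) : Type :=
  (i : ℕ) → (Fin (i + 1) → FBall 𝔽 m n) → FBall 𝔽 m n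

/-- White's move at stage `i` when following strategy `str` against Black's balls `B`. -/
def wMove {m n : ℕ} (str : Strategy 𝔽 m n) (B : ℕ → FBall 𝔽 m n) (i : ℕ) : FBall 𝔽 m n :=
  str i fun j => B j.1

/-- Black's move `B_{j+2}` is legal (for parameter `β`): it is a formal subset of
White's ball `W_{j+1}` and has radius `β · ρ(W_{j+1})`. -/
def BlackOk {m n : ℕ} (β : ℝ) (str : Strategy 𝔽 m n) (B : ℕ → FBall 𝔽 m n) (j : ℕ) : Prop :=
  (B (j + 1)).ssub (wMove str B j) ∧ (B (j + 1)).r = β * (wMove str B j).r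

/-- White's move `W_{i+1}` is legal (for parameter `α`): it is a formal subset of
Black's ball `B_{i+1}` and has radius `α · ρ(B_{i+1})`. -/
def WhiteOk {m n : ℕ} (α : ℝ) (str : Strategy 𝔽 m n) (B : ℕ → FBall 𝔽 m n) (i : ℕ) : Prop :=
  (wMove str B i).ssub (B i) ∧ (wMove str B i).r = α * (B i).r

/-- `str` is a winning strategy for White in the `(α,β;S)`-game: against any
sequence of Black balls, White's moves are legal as long as Black has played
legally so far, and if the whole play is legal then the intersection of the
chosen balls is contained in `S`. -/
def WinningStrategy {m n : ℕ} (α β : ℝ) (S : Set (Mat 𝔽 m n)) (str : Strategy 𝔽 m n) : Prop :=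
  ∀ B : ℕ → FBall 𝔽 m n, 0 ≤ (B 0).r →
    (∀ i, (∀ j < i, BlackOk β str B j) → WhiteOk α str B i) ∧
    ((∀ j, BlackOk β str B j) → (⋂ i, (B i).toSet) ⊆ S)

/-- `S` is `(α,β)`-winning. -/
def IsWinningAB {m n : ℕ} (α β : ℝ) (S : Set (Mat 𝔽 m n)) : Prop :=
  ∃ str : Strategy 𝔽 m n, WinningStrategy α β S str

/-- `S` is `α`-winning. -/
def IsWinningA {m n : ℕ} (α : ℝ) (S : Set (Mat 𝔽 m n)) : Prop :=
  ∀ β : ℝ, 0 < β → β < 1 → IsWinningAB α β S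

/-- The winning dimension of `S` (a supremum of a set of reals, which is `0` by
convention when the set is empty). -/
def windim {m n : ℕ} (S : Set (Mat 𝔽 m n)) : ℝ :=
  sSup {α : ℝ | 0 < α ∧ α < 1 ∧ IsWinningA α S}

/-! ### The matrices `Ā`, `Ā^*` and the quantities `M_v`, `D_v`, `∇D_v` -/

/-- `Ā = [[A, I_m], [I_n, 0]]`. Rows are indexed by `Fin m ⊕ Fin n`
(coordinates `q_1, …, q_{m+n}`), columns by `Fin n ⊕ Fin m`. -/
def Abar {m n : ℕ} (A : Mat 𝔽 m n) : Matrix (Fin m ⊕ Fin n) (Fin n ⊕ Fin m) (L 𝔽) :=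
  Matrix.fromBlocks A 1 1 0

/-- `Ā^* = [[Aᵀ, I_n], [I_m, 0]]`. Rows are indexed by `Fin n ⊕ Fin m`,
columns by `Fin m ⊕ Fin n`. -/
def AbarStar {m n : ℕ} (A : Mat 𝔽 m n) : Matrix (Fin n ⊕ Fin m) (Fin m ⊕ Fin n) (L 𝔽) :=
  Matrix.fromBlocks A.transpose 1 1 0

/-- The standard bilinear form `x·y = Σ_i x_i y_i` on `ℒ^ι`. -/
def dotL {ι : Type*} [Fintype ι] (x y : ι → L 𝔽) : L 𝔽 := ∑ i, x i * y i

/-- Strictly increasing `v`-tuples `1 ≤ i_1 < ⋯ < i_v ≤ m`. -/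
def IncTuple (v m : ℕ) : Type := {f : Fin v → Fin m // StrictMono f}

/-- The vector `M_v(A) ∈ ℒ^(C(m,v)²)` of the determinants
`det (y_{i_r} · C_{j_s}(Ā^*))_{1 ≤ r,s ≤ v}` over all strictly increasing index
tuples.  (For `v = 0` every coordinate is an empty determinant, i.e. `1`.) -/
def MvVec {m n : ℕ} (y : Fin m → (Fin n ⊕ Fin m → L 𝔽)) (v : ℕ) (A : Mat 𝔽 m n) :
    IncTuple v m × IncTuple v m → L 𝔽 := fun p =>
  Matrix.det (Matrix.of fun r s : Fin v =>
    dotL (y (p.1.1 r)) fun t => AbarStar A t (Sum.inl (p.2.1 s)))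

/-- `‖M_v(A)‖_∞`. -/
def MvNorm {m n : ℕ} (y : Fin m → (Fin n ⊕ Fin m → L 𝔽)) (v : ℕ) (A : Mat 𝔽 m n) : ℝ :=
  vnorm (MvVec y v A)

/-- `M_v(K) = max_{A ∈ K} ‖M_v(A)‖_∞` for `K ⊆ ℒ^(mn)`. -/
def MvSet {m n : ℕ} (y : Fin m → (Fin n ⊕ Fin m → L 𝔽)) (v : ℕ) (K : Set (Mat 𝔽 m n)) : ℝ :=
  sSup {r : ℝ | ∃ A ∈ K, r = MvNorm y v A}

/-- `D_v(A) = det (y_h · C_l(Ā^*))_{1 ≤ h,l ≤ v}`. -/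
def Dv {m n : ℕ} (y : Fin m → (Fin n ⊕ Fin m → L 𝔽)) (v : ℕ) (hv : v ≤ m)
    (A : Mat 𝔽 m n) : L 𝔽 :=
  Matrix.det (Matrix.of fun h l : Fin v =>
    dotL (y (Fin.castLE hv h)) fun t => AbarStar A t (Sum.inl (Fin.castLE hv l)))

/-- The discrete gradient `∇D_v(A) ∈ ℒ^(mn)`, with coordinates
`D_v(A + E_{ij}) - D_v(A)`. -/
def gradDv {m n : ℕ} (y : Fin m → (Fin n ⊕ Fin m → L 𝔽)) (v : ℕ) (hv : v ≤ m)
    (A : Mat 𝔽 m n) : Fin m × Fin n → L 𝔽 := fun p =>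
  Dv y v hv (A + Matrix.single p.1 p.2 1) - Dv y v hv A

/-- `y_1, …, y_m ∈ ℒ^(m+n)` form an orthonormal system: `y_h · y_{h'} = δ_{h h'}`
and `‖t_1 y_1 + ⋯ + t_m y_m‖_∞ = max_h ‖t_h‖`. -/
def OrthoSystem {m n : ℕ} (y : Fin m → (Fin n ⊕ Fin m → L 𝔽)) : Prop :=
  (∀ h h', dotL (y h) (y h') = if h = h' then 1 else 0) ∧
  (∀ t : Fin m → L 𝔽, vnorm (fun r => ∑ h, t h * y h r) = ⨆ h, lnorm (t h))

/-! ### Distance functions, parallelepipeds and successive minima -/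

/-- The `j`-th successive minimum of a distance function `F` on `ℒ^N`: the infimum
of all `λ > 0` such that `{F < λ}` contains `j` linearly independent points of
`𝔽[X]^N`. -/
def succMin {N : ℕ} (F : (Fin N → L 𝔽) → ℝ) (j : ℕ) : ℝ :=
  sInf {lam : ℝ | 0 < lam ∧ ∃ v : Fin j → (Fin N → L 𝔽),
    (∀ r, ∀ i, IsPoly (v r i)) ∧ LinearIndependent (L 𝔽) v ∧ ∀ r, F (v r) < lam}

/-- The distance function `F_A(x) = max_j c_j⁻¹ ‖Σ_i x_i a_{ij}‖`. -/
def FA {N : ℕ} (A : Matrix (Fin N) (Fin N) (L 𝔽)) (c : Fin N → ℝ)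
    (x : Fin N → L 𝔽) : ℝ :=
  ⨆ j, (c j)⁻¹ * lnorm (∑ i, x i * A i j)

/-- The parallelepiped `P_A(λ) = {x ∈ ℒ^N : F_A(x) < λ}`. -/
def PA {N : ℕ} (A : Matrix (Fin N) (Fin N) (L 𝔽)) (c : Fin N → ℝ) (lam : ℝ) :
    Set (Fin N → L 𝔽) := {x | FA A c x < lam}

/-- The polar distance function `F_A^*(y) = sup_{x ≠ 0} ‖x·y‖ / F_A(x)`. -/
def FAstar {N : ℕ} (A : Matrix (Fin N) (Fin N) (L 𝔽)) (c : Fin N → ℝ)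
    (y : Fin N → L 𝔽) : ℝ :=
  ⨆ x : {x : Fin N → L 𝔽 // x ≠ 0}, lnorm (dotL x.1 y) / FA A c x.1

/-! ### Haar measure, characterized by translation invariance and normalization -/

/-- The Borel σ-algebra on `ℒ^N`, generated by the balls. -/
def vecSigma (𝔽 : Type) [Field 𝔽] [Fintype 𝔽] (N : ℕ) : MeasurableSpace (Fin N → L 𝔽) :=
  MeasurableSpace.generateFrom {s | ∃ c ρ, (0 : ℝ) < ρ ∧ s = vball c ρ}

/-- `μ` is the Haar measure on `ℒ^N`: translation invariant and normalized so that
the unit ball `I^N` has measure `1` (these properties determine it uniquely). -/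
def IsHaarVec {N : ℕ} (μ : @Measure (Fin N → L 𝔽) (vecSigma 𝔽 N)) : Prop :=
  (∀ (v : Fin N → L 𝔽) (s : Set (Fin N → L 𝔽)), μ ((fun x => x + v) ⁻¹' s) = μ s) ∧
  μ {x | ∀ i, lnorm (x i) < 1} = 1

/-- The Borel σ-algebra on `ℒ^(mn)`, generated by the balls. -/
def matSigma (𝔽 : Type) [Field 𝔽] [Fintype 𝔽] (m n : ℕ) : MeasurableSpace (Mat 𝔽 m n) :=
  MeasurableSpace.generateFrom {s | ∃ c ρ, (0 : ℝ) < ρ ∧ s = mball c ρ}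

/-- `μ` is the Haar measure on `ℒ^(mn)`: translation invariant and normalized so
that the unit ball `I^(mn)` has measure `1`. -/
def IsHaarMat {m n : ℕ} (μ : @Measure (Mat 𝔽 m n) (matSigma 𝔽 m n)) : Prop :=
  (∀ (v : Mat 𝔽 m n) (s : Set (Mat 𝔽 m n)), μ ((fun x => x + v) ⁻¹' s) = μ s) ∧
  μ {A | ∀ i j, lnorm (A i j) < 1} = 1

/-! ### The constants of Section 3 -/

/-- `τ = m/(m+n)`. -/
def tau (m n : ℕ) : ℝ := m / (m + n)

/-- `δ = R^(-m(m+n)²)`. -/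
def del (R : ℝ) (m n : ℕ) : ℝ := R ^ (-((m : ℝ) * ((m : ℝ) + n) ^ 2))

/-- `δ* = R^(-n(m+n)²)`. -/
def delStar (R : ℝ) (m n : ℕ) : ℝ := R ^ (-((n : ℝ) * ((m : ℝ) + n) ^ 2))

/-! The lattice has a basis `b₁, …, b_N` that is orthogonal in the ultrametric sense,
`F (∑ tᵢ bᵢ) = max ‖tᵢ‖ F (bᵢ)`. Indeed, take a basis whose vectors cannot be shortened: if
orthogonality fails at `t`, then dividing `t` by a dominant coefficient and rounding the others to
lattice scalars gives a unimodular replacement of one basis vector by a shorter one. Since nonzero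
lattice scalars have absolute value at least `1`, the successive minima of `F` are the lengths
`F (bᵢ)` in increasing order. The polar function equals `max ‖sᵢ‖ / F (bᵢ)` in the dual basis, so
the dual basis is again orthogonal, and its lengths are the inverses, in the opposite order. -/

open scoped Matrix

/-! ### Nonarchimedean distance functions -/

section DistanceFunction

variable {K V : Type*} [Field K] [AddCommGroup V] [Module K V] {v : AbsoluteValue K ℝ}

/-- A distance function on a `K`-vector space: a norm satisfying the ultrametric inequality,
homogeneous with respect to the absolute value `v` of `K`. -/
structure IsDistanceFunction (v : AbsoluteValue K ℝ) (F : V → ℝ) : Prop where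
  map_smul (t : K) (x : V) : F (t • x) = v t * F x
  isNonarchimedean : IsNonarchimedean F
  pos {x : V} : x ≠ 0 → 0 < F x

namespace IsDistanceFunction

variable {F : V → ℝ}

lemma map_zero (hF : IsDistanceFunction v F) : F 0 = 0 := by
  simpa using hF.map_smul 0 0

lemma nonneg (hF : IsDistanceFunction v F) (x : V) : 0 ≤ F x := by
  obtain rfl | hx := eq_or_ne x 0
  · exact hF.map_zero.ge
  · exact (hF.pos hx).le

lemma map_sum_le {ι : Type*} [Fintype ι] (hF : IsDistanceFunction v F) {f : ι → V} {r : ℝ}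
    (hr : 0 ≤ r) (h : ∀ i, F (f i) ≤ r) : F (∑ i, f i) ≤ r := by
  cases isEmpty_or_nonempty ι
  · simpa [hF.map_zero] using hr
  · obtain ⟨i, -, hi⟩ := hF.isNonarchimedean.finset_image_add_of_nonempty f Finset.univ_nonempty
    exact hi.trans (h i)

lemma map_sum_lt {ι : Type*} [Fintype ι] (hF : IsDistanceFunction v F) {f : ι → V} {r : ℝ}
    (hr : 0 < r) (h : ∀ i, F (f i) < r) : F (∑ i, f i) < r := by
  cases isEmpty_or_nonempty ι
  · simpa [hF.map_zero] using hr
  · obtain ⟨i, -, hi⟩ := hF.isNonarchimedean.finset_image_add_of_nonempty f Finset.univ_nonempty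
    exact hi.trans_lt (h i)

lemma isNonarchimedean_absoluteValue [Nontrivial V] (hF : IsDistanceFunction v F) :
    IsNonarchimedean v := fun s t => by
  obtain ⟨x, hx⟩ := exists_ne (0 : V)
  have hadd := hF.isNonarchimedean (s • x) (t • x)
  rw [← add_smul, hF.map_smul, hF.map_smul, hF.map_smul,
    ← max_mul_of_nonneg _ _ (hF.nonneg x)] at hadd
  exact le_of_mul_le_mul_right hadd (hF.pos hx)

end IsDistanceFunction

lemma isDistanceFunction_absoluteValue (hv : IsNonarchimedean v) : IsDistanceFunction v v where
  map_smul t x := by rw [smul_eq_mul, map_mul]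
  isNonarchimedean := hv
  pos hx := v.pos hx

lemma isDistanceFunction_iSup {ι : Type*} [Finite ι] (hv : IsNonarchimedean v) {w : ι → ℝ}
    (hw : ∀ i, 0 < w i) {φ : V →ₗ[K] ι → K} (hφ : Function.Injective φ) :
    IsDistanceFunction v fun x => ⨆ i, w i * v (φ x i) := by
  have le_sup (x : V) (i : ι) : w i * v (φ x i) ≤ ⨆ i, w i * v (φ x i) :=
    le_ciSup (f := fun i => w i * v (φ x i)) (Finite.bddAbove_range _) i
  have sup_nonneg (x : V) : 0 ≤ ⨆ i, w i * v (φ x i) :=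
    Real.iSup_nonneg fun i => mul_nonneg (hw i).le (v.nonneg _)
  refine ⟨fun t x => ?_, fun x y => ?_, fun {x} hx => ?_⟩
  · rw [Real.mul_iSup_of_nonneg (v.nonneg t)]
    simp only [_root_.map_smul, Pi.smul_apply, smul_eq_mul, map_mul, mul_left_comm]
  · refine Real.iSup_le (fun i => ?_) (le_max_of_le_left (sup_nonneg x))
    calc w i * v (φ (x + y) i) ≤ w i * max (v (φ x i)) (v (φ y i)) := by
          rw [map_add, Pi.add_apply]
          exact mul_le_mul_of_nonneg_left (hv _ _) (hw i).le
      _ = max (w i * v (φ x i)) (w i * v (φ y i)) := mul_max_of_nonneg _ _ (hw i).le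
      _ ≤ _ := max_le_max (le_sup x i) (le_sup y i)
  · obtain ⟨i, hi⟩ := Function.ne_iff.1 ((map_ne_zero_iff φ hφ).2 hx)
    exact (mul_pos (hw i) (v.pos hi)).trans_le (le_sup x i)

/-- The polar of a function `F` on `K^ι` with respect to the standard bilinear form. -/
def polar {ι : Type*} [Fintype ι] (v : AbsoluteValue K ℝ) (F : (ι → K) → ℝ) (y : ι → K) : ℝ :=
  ⨆ x : {x : ι → K // x ≠ 0}, v (x.1 ⬝ᵥ y) / F x.1

/-- The `j`-th successive minimum of `F` with respect to the lattice `R^ι` in `K^ι`. -/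
def successiveMin {ι : Type*} (R : Subring K) (F : (ι → K) → ℝ) (j : ℕ) : ℝ :=
  sInf {lam : ℝ | 0 < lam ∧ ∃ x : Fin j → ι → K,
    (∀ r i, x r i ∈ R) ∧ LinearIndependent K x ∧ ∀ r, F (x r) < lam}

/-- `t / t j` has `j`-th coordinate `1`; rounding its coordinates of absolute value `≥ 1` to `R`
and dropping the others changes the combination by less than `F (b j)`, provided `j` maximizes
first `v (t i) * F (b i)` and then `F (b i)`. -/
lemma IsDistanceFunction.exists_sum_smul_lt {ι : Type*} [Fintype ι] {F : V → ℝ} {R : Subring K}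
    (hF : IsDistanceFunction v F) (hR : ∀ z, ∃ p ∈ R, v (z - p) < 1) {b : ι → V}
    (hb : ∀ i, b i ≠ 0) {t : ι → K} {i₀ : ι} (ht : F (∑ i, t i • b i) < v (t i₀) * F (b i₀)) :
    ∃ (j : ι) (u : ι → R), u j = 1 ∧ F (∑ i, u i • b i) < F (b j) := by
  have : Nonempty ι := ⟨i₀⟩
  obtain ⟨j, hj⟩ := Finite.exists_max fun i => toLex (v (t i) * F (b i), F (b i))
  simp only [Prod.Lex.le_iff, ofLex_toLex] at hj
  have hlt : F (∑ i, t i • b i) < v (t j) * F (b j) :=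
    ht.trans_le ((hj i₀).elim le_of_lt fun h => h.1.le)
  have htj : 0 < v (t j) := pos_of_mul_pos_left ((hF.nonneg _).trans_lt hlt) (hF.nonneg _)
  have htj0 : t j ≠ 0 := v.pos_iff.1 htj
  have round (i : ι) : ∃ u : R, (i = j → u = 1) ∧ F ((u - (t j)⁻¹ * t i) • b i) < F (b j) := by
    simp only [hF.map_smul]
    obtain rfl | hij := eq_or_ne i j
    · exact ⟨1, fun _ => rfl, by simp [htj0, hF.pos (hb i)]⟩
    obtain hlt | ⟨-, hle⟩ := hj i
    · refine ⟨0, (absurd · hij), ?_⟩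
      rw [ZeroMemClass.coe_zero, zero_sub, v.map_neg, map_mul, map_inv₀, mul_assoc,
        inv_mul_lt_iff₀ htj]
      exact hlt
    · obtain ⟨p, hp, hlt⟩ := hR ((t j)⁻¹ * t i)
      refine ⟨⟨p, hp⟩, (absurd · hij), ?_⟩
      rw [v.map_sub]
      exact (mul_lt_of_lt_one_left (hF.pos (hb i)) hlt).trans_le hle
  choose u hu hlt_u using round
  refine ⟨j, u, hu j rfl, ?_⟩
  have split : ∑ i, u i • b i =
      (t j)⁻¹ • ∑ i, t i • b i + ∑ i, ((u i : K) - (t j)⁻¹ * t i) • b i := by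
    simp only [Finset.smul_sum, smul_smul, ← Finset.sum_add_distrib, ← add_smul,
      add_sub_cancel, Subring.smul_def]
  rw [split]
  refine (hF.isNonarchimedean _ _).trans_lt (max_lt ?_ ?_)
  · rwa [hF.map_smul, map_inv₀, inv_mul_lt_iff₀ htj]
  · exact hF.map_sum_lt (hF.pos (hb j)) hlt_u

end DistanceFunction

/-! ### Values of weighted maximum norms on the lattice -/

section LatticeValues

variable {K ι : Type*} [Field K] {v : AbsoluteValue K ℝ} {w : ι → ℝ}

lemma IsDistanceFunction.exists_le_mul_iSup [Finite ι] {G : (ι → K) → ℝ}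
    (hG : IsDistanceFunction v G) (hw : ∀ i, 0 < w i) :
    ∃ C > 0, ∀ x, G x ≤ C * ⨆ i, w i * v (x i) := by
  have := Fintype.ofFinite ι
  let C : ℝ := 1 + ∑ i, G (Pi.single i 1) / w i
  have ratio_nonneg (i : ι) : 0 ≤ G (Pi.single i 1) / w i := div_nonneg (hG.nonneg _) (hw i).le
  have hC : 0 < C := add_pos_of_pos_of_nonneg one_pos (Finset.sum_nonneg fun i _ => ratio_nonneg i)
  have le_C (i : ι) : G (Pi.single i 1) / w i ≤ C :=
    (Finset.single_le_sum (fun i _ => ratio_nonneg i) (Finset.mem_univ i)).trans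
      (le_add_of_nonneg_left zero_le_one)
  refine ⟨C, hC, fun x => ?_⟩
  conv_lhs => rw [pi_eq_sum_univ' x]
  refine hG.map_sum_le (mul_nonneg hC.le <|
    Real.iSup_nonneg fun i => mul_nonneg (hw i).le (v.nonneg _)) fun i => ?_
  calc G (x i • Pi.single i 1) = G (Pi.single i 1) / w i * (w i * v (x i)) := by
        rw [hG.map_smul]
        field_simp [(hw i).ne']
    _ ≤ _ := mul_le_mul (le_C i)
        (le_ciSup (f := fun i => w i * v (x i)) (Finite.bddAbove_range _) i)
        (mul_nonneg (hw i).le (v.nonneg _)) hC.le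

lemma exists_pos_le_iSup_vecMul [Fintype ι] [DecidableEq ι] {R : Subring K}
    (hv : IsNonarchimedean v) (hR : ∀ r ∈ R, r ≠ 0 → 1 ≤ v r) (hw : ∀ i, 0 < w i)
    {A : Matrix ι ι K} (hA : IsUnit A) :
    ∃ δ > 0, ∀ x : ι → R, x ≠ 0 → δ ≤ ⨆ j, w j * v (((R.subtype ∘ x) ᵥ* A) j) := by
  have hinj : Function.Injective A⁻¹.vecMulLinear :=
    Matrix.vecMul_injective_iff_isUnit.2 (Matrix.isUnit_nonsing_inv_iff.2 hA)
  obtain ⟨C, hC, hle⟩ :=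
    (isDistanceFunction_iSup hv (fun _ : ι => one_pos) hinj).exists_le_mul_iSup hw
  refine ⟨C⁻¹, inv_pos.2 hC, fun x hx => ?_⟩
  obtain ⟨i, hi⟩ := Function.ne_iff.1 hx
  have hcancel : A⁻¹.vecMulLinear ((R.subtype ∘ x) ᵥ* A) = R.subtype ∘ x := by
    rw [Matrix.vecMulLinear_apply, Matrix.vecMul_vecMul,
      Matrix.mul_nonsing_inv A ((Matrix.isUnit_iff_isUnit_det A).1 hA), Matrix.vecMul_one]
  rw [inv_le_iff_one_le_mul₀' hC]
  calc 1 ≤ 1 * v (R.subtype (x i)) := by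
        rw [one_mul]
        exact hR _ (x i).2 (Subtype.coe_ne_coe.2 hi)
    _ ≤ ⨆ i, 1 * v ((R.subtype ∘ x) i) :=
        le_ciSup (f := fun i => 1 * v ((R.subtype ∘ x) i)) (Finite.bddAbove_range _) i
    _ ≤ _ := by simpa only [hcancel] using hle ((R.subtype ∘ x) ᵥ* A)

lemma isPWO_range_iSup_vecMul [Fintype ι] [DecidableEq ι] {R : Subring K}
    (hv : IsNonarchimedean v)
    (hdisc : ∀ δ > 0, (Set.range v ∩ Set.Ici δ).IsPWO) (hR : ∀ r ∈ R, r ≠ 0 → 1 ≤ v r)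
    (hw : ∀ i, 0 < w i) {A : Matrix ι ι K} (hA : IsUnit A) :
    (Set.range fun x : ι → R => ⨆ j, w j * v (((R.subtype ∘ x) ᵥ* A) j)).IsPWO := by
  obtain ⟨δ, hδ, hle⟩ := exists_pos_le_iSup_vecMul hv hR hw hA
  have hpwo : (⋃ j ∈ Finset.univ, (w j * ·) '' (Set.range v ∩ Set.Ici (δ / w j))).IsPWO :=
    (Finset.isPWO_bUnion _).2 fun j _ => (hdisc _ (div_pos hδ (hw j))).image_of_monotone
      (monotone_mul_left_of_nonneg (hw j).le)
  refine (hpwo.insert 0).mono ?_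
  rintro _ ⟨x, rfl⟩
  obtain rfl | hx := eq_or_ne x 0
  · left
    simp
  right
  have : Nonempty ι := (Function.ne_iff.1 hx).nonempty
  obtain ⟨j, hj⟩ := exists_eq_ciSup_of_finite (f := fun j => w j * v (((R.subtype ∘ x) ᵥ* A) j))
  have hδj : δ / w j ≤ v (((R.subtype ∘ x) ᵥ* A) j) := by
    rw [div_le_iff₀' (hw j), hj]
    exact hle x hx
  exact Set.mem_biUnion (Finset.mem_univ j) ⟨_, ⟨⟨_, rfl⟩, hδj⟩, hj⟩

end LatticeValues

/-! ### Reduced bases of the lattice -/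

section ReducedBasis

variable {K ι : Type*} [Field K] [Fintype ι] [DecidableEq ι] {v : AbsoluteValue K ℝ}
  {R : Subring K} {F : (ι → K) → ℝ} {B : Matrix ι ι R} {w : ι → ℝ}

/-- The rows of `B` form a basis of the lattice `R^ι` which is orthogonal for `F` in the
nonarchimedean sense; `w` lists the lengths of the rows. -/
structure IsReducedBasis (v : AbsoluteValue K ℝ) (F : (ι → K) → ℝ) (B : Matrix ι ι R)
    (w : ι → ℝ) : Prop where
  isUnit : IsUnit B
  pos (i : ι) : 0 < w i
  apply_vecMul (t : ι → K) : F (t ᵥ* B.map R.subtype) = ⨆ i, v (t i) * w i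

lemma isUnit_map_subtype (hB : IsUnit B) : IsUnit (B.map R.subtype) :=
  hB.map R.subtype.mapMatrix

lemma row_map_subtype_ne_zero (hB : IsUnit B) (i : ι) : (B.map R.subtype).row i ≠ 0 :=
  (Matrix.linearIndependent_rows_of_isUnit (isUnit_map_subtype hB)).ne_zero i

lemma map_subtype_mul_map_subtype_inv (hB : IsUnit B) :
    B.map R.subtype * B⁻¹.map R.subtype = 1 := by
  rw [← Matrix.map_mul, Matrix.mul_nonsing_inv B ((Matrix.isUnit_iff_isUnit_det B).1 hB),
    Matrix.map_one _ (map_zero _) (map_one _)]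

lemma vecMul_dotProduct_vecMul_inv_transpose (hB : IsUnit B) (s t : ι → K) :
    t ᵥ* B.map R.subtype ⬝ᵥ s ᵥ* B⁻¹ᵀ.map R.subtype = t ⬝ᵥ s := by
  rw [Matrix.transpose_map, Matrix.vecMul_transpose, Matrix.dotProduct_mulVec,
    Matrix.vecMul_vecMul, map_subtype_mul_map_subtype_inv hB, Matrix.vecMul_one]

namespace IsReducedBasis

lemma mul_le (h : IsReducedBasis v F B w) (t : ι → K) (i : ι) :
    v (t i) * w i ≤ F (t ᵥ* B.map R.subtype) := by
  rw [h.apply_vecMul]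
  exact le_ciSup (f := fun i => v (t i) * w i) (Finite.bddAbove_range _) i

lemma nonneg (h : IsReducedBasis v F B w) (x : ι → K) : 0 ≤ F x := by
  obtain ⟨t, rfl⟩ := Matrix.vecMul_surjective_iff_isUnit.2 (isUnit_map_subtype h.isUnit) x
  change 0 ≤ F (t ᵥ* B.map R.subtype)
  rw [h.apply_vecMul]
  exact Real.iSup_nonneg fun i => mul_nonneg (v.nonneg _) (h.pos i).le

lemma apply_row (h : IsReducedBasis v F B w) (i : ι) : F ((B.map R.subtype).row i) = w i := by
  rw [← Matrix.single_one_vecMul]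
  apply le_antisymm
  · rw [h.apply_vecMul]
    refine Real.iSup_le (fun j => ?_) (h.pos i).le
    obtain rfl | hij := eq_or_ne j i
    · simp
    · simp [hij, (h.pos i).le]
  · simpa using h.mul_le (Pi.single i 1) i

lemma submatrix (h : IsReducedBasis v F B w) (e : ι ≃ ι) :
    IsReducedBasis v F (B.submatrix e id) (w ∘ e) where
  isUnit := (Matrix.isUnit_submatrix_equiv e (Equiv.refl ι)).2 h.isUnit
  pos i := h.pos (e i)
  apply_vecMul t := by
    have hperm : t ᵥ* (B.submatrix e id).map R.subtype = (t ∘ e.symm) ᵥ* B.map R.subtype :=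
      Matrix.submatrix_vecMul_equiv (B.map R.subtype) t e id
    rw [hperm, h.apply_vecMul, ← e.iSup_comp]
    simp

/-- Duality of `ℓ^∞` and `ℓ^1` norms, both of which are maxima here. -/
lemma polar_apply_vecMul (hv : IsNonarchimedean v) (h : IsReducedBasis v F B w) (s : ι → K) :
    polar v F (s ᵥ* B⁻¹ᵀ.map R.subtype) = ⨆ i, v (s i) * w⁻¹ i := by
  have hsup_nonneg : 0 ≤ ⨆ i, v (s i) * w⁻¹ i :=
    Real.iSup_nonneg fun i => mul_nonneg (v.nonneg _) (inv_pos.2 (h.pos i)).le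
  have hle (x : {x : ι → K // x ≠ 0}) :
      v (x.1 ⬝ᵥ s ᵥ* B⁻¹ᵀ.map R.subtype) / F x.1 ≤ ⨆ i, v (s i) * w⁻¹ i := by
    obtain ⟨t, ht⟩ := Matrix.vecMul_surjective_iff_isUnit.2 (isUnit_map_subtype h.isUnit) x.1
    rw [← ht, vecMul_dotProduct_vecMul_inv_transpose h.isUnit]
    refine div_le_of_le_mul₀ (h.nonneg _) hsup_nonneg ?_
    refine (isDistanceFunction_absoluteValue hv).map_sum_le
      (mul_nonneg hsup_nonneg (h.nonneg _)) fun i => ?_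
    calc v (t i * s i) = v (s i) * w⁻¹ i * (v (t i) * w i) := by
          rw [map_mul, Pi.inv_apply]
          field_simp [(h.pos i).ne']
      _ ≤ _ := mul_le_mul (le_ciSup (f := fun i => v (s i) * w⁻¹ i) (Finite.bddAbove_range _) i)
          (h.mul_le t i) (mul_nonneg (v.nonneg _) (h.pos i).le) hsup_nonneg
  refine le_antisymm (Real.iSup_le hle hsup_nonneg)
    (Real.iSup_le (fun i => ?_) (Real.iSup_nonneg fun x => div_nonneg (v.nonneg _) (h.nonneg _)))
  calc v (s i) * w⁻¹ i = v ((B.map R.subtype).row i ⬝ᵥ s ᵥ* B⁻¹ᵀ.map R.subtype)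
        / F ((B.map R.subtype).row i) := by
        rw [h.apply_row, ← Matrix.single_one_vecMul i (B.map R.subtype),
          vecMul_dotProduct_vecMul_inv_transpose h.isUnit, single_one_dotProduct, Pi.inv_apply,
          div_eq_mul_inv]
    _ ≤ _ := le_ciSup (f := fun x : {x : ι → K // x ≠ 0} =>
        v (x.1 ⬝ᵥ s ᵥ* B⁻¹ᵀ.map R.subtype) / F x.1) ⟨_, Set.forall_mem_range.2 hle⟩
        ⟨_, row_map_subtype_ne_zero h.isUnit i⟩

lemma dual (hv : IsNonarchimedean v) (h : IsReducedBasis v F B w) :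
    IsReducedBasis v (polar v F) B⁻¹ᵀ w⁻¹ where
  isUnit := (Matrix.isUnit_transpose _).2 (Matrix.isUnit_nonsing_inv_iff.2 h.isUnit)
  pos i := inv_pos.2 (h.pos i)
  apply_vecMul := h.polar_apply_vecMul hv

end IsReducedBasis

/-- The basis is minimal for the componentwise order on the tuple of lengths of its rows. -/
theorem exists_isReducedBasis (hF : IsDistanceFunction v F) (hR : ∀ z, ∃ p ∈ R, v (z - p) < 1)
    (hpwo : (Set.range fun x : ι → R => F fun i => x i).IsPWO) :
    ∃ (B : Matrix ι ι R) (w : ι → ℝ), IsReducedBasis v F B w := by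
  let len (B : Matrix ι ι R) (i : ι) : ℝ := F ((B.map R.subtype).row i)
  obtain ⟨B, hB, hmin⟩ := Set.IsPWO.exists_minimalFor len {B | IsUnit B}
    ((Set.IsPWO.pi fun _ => hpwo).mono <| by
      rintro _ ⟨B, -, rfl⟩ i -
      exact ⟨B.row i, rfl⟩) ⟨1, isUnit_one⟩
  have hrow (i : ι) : (B.map R.subtype).row i ≠ 0 := row_map_subtype_ne_zero hB i
  refine ⟨B, len B, hB, fun i => hF.pos (hrow i), fun t => ?_⟩
  rw [Matrix.vecMul_eq_sum]
  apply le_antisymm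
  · refine hF.map_sum_le (Real.iSup_nonneg fun i => mul_nonneg (v.nonneg _) (hF.nonneg _))
      fun i => ?_
    rw [hF.map_smul]
    exact le_ciSup (f := fun i => v (t i) * len B i) (Finite.bddAbove_range _) i
  refine Real.iSup_le (fun i => ?_) (hF.nonneg _)
  by_contra! hlt
  obtain ⟨j, u, huj, hu⟩ := hF.exists_sum_smul_lt hR hrow hlt
  let B' : Matrix ι ι R := B.updateRow j (∑ k, u k • B k)
  have hB' : IsUnit B' := by
    rwa [Matrix.isUnit_iff_isUnit_det, Matrix.det_updateRow_sum, huj, one_smul,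
      ← Matrix.isUnit_iff_isUnit_det]
  have hlen_self : len B' j < len B j := by
    convert hu
    ext k
    simp [B', Matrix.row, Subring.smul_def]
  have hlen_le : len B' ≤ len B := fun k => by
    obtain rfl | hk := eq_or_ne k j
    · exact hlen_self.le
    · exact le_of_eq <| by
        simp only [len, B', Matrix.row, Matrix.map_updateRow, Matrix.updateRow_ne hk]
  exact hlen_self.not_ge (hmin hB' hlen_le j)

lemma exists_subtype_comp_vecMul_eq (hB : IsUnit B) {x : ι → K} (hx : ∀ i, x i ∈ R) :
    ∃ t : ι → R, (R.subtype ∘ t) ᵥ* B.map R.subtype = x := by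
  obtain ⟨t, ht⟩ := Matrix.vecMul_surjective_iff_isUnit.2 hB fun i => ⟨x i, hx i⟩
  refine ⟨t, funext fun i => ?_⟩
  exact (R.subtype.map_vecMul B t i).symm.trans (congrArg (fun y => R.subtype (y i)) ht)

end ReducedBasis

/-! ### Successive minima -/

section SuccessiveMinima

variable {K : Type*} [Field K] {v : AbsoluteValue K ℝ} {R : Subring K} {N : ℕ}
  {F : (Fin N → K) → ℝ}

lemma exists_le_apply_ne_zero_of_linearIndependent {j : ℕ} {t : Fin (j + 1) → Fin N → K}
    (ht : LinearIndependent K t) : ∃ r, ∃ i : Fin N, j ≤ i ∧ t r i ≠ 0 := by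
  by_contra! hzero
  let S : Type := {i : Fin N // (i : ℕ) < j}
  have hext : t = Function.ExtendByZero.linearMap K (Subtype.val : S → Fin N) ∘
      fun r => t r ∘ Subtype.val := by
    ext r i
    by_cases hi : (i : ℕ) < j
    · exact (Subtype.val_injective.extend_apply (t r ∘ Subtype.val) 0 (⟨i, hi⟩ : S)).symm
    · have hnot : ¬∃ k : S, k.1 = i := fun ⟨k, hk⟩ => hi (hk ▸ k.2)
      rw [hzero r i (not_lt.1 hi)]
      exact (Function.extend_apply' (t r ∘ Subtype.val) (0 : Fin N → K) i hnot).symm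
  have hrestrict : LinearIndependent K fun r => t r ∘ (Subtype.val : S → Fin N) := by
    rw [hext] at ht
    exact ht.of_comp _
  have hcard : Fintype.card S ≤ j := by
    simpa using Fintype.card_le_of_injective (fun i : S => (⟨i.1, i.2⟩ : Fin j))
      fun a b hab => by ext; simpa using hab
  have hdim := hrestrict.fintype_card_le_finrank
  rw [Fintype.card_fin, Module.finrank_fintype_fun_eq_card] at hdim
  lia

namespace IsReducedBasis

variable {B : Matrix (Fin N) (Fin N) R} {w : Fin N → ℝ}

lemma exists_le_apply_of_linearIndependent (hR : ∀ r ∈ R, r ≠ 0 → 1 ≤ v r)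
    (h : IsReducedBasis v F B w) (hw : Monotone w) (i : Fin N) {x : Fin (i + 1) → Fin N → K}
    (hxR : ∀ r k, x r k ∈ R) (hx : LinearIndependent K x) : ∃ r, w i ≤ F (x r) := by
  choose t ht using fun r => exists_subtype_comp_vecMul_eq h.isUnit (hxR r)
  have ht_indep : LinearIndependent K fun r => R.subtype ∘ t r := by
    rw [← funext ht] at hx
    exact hx.of_comp (B.map R.subtype).vecMulLinear
  obtain ⟨r, k, hik, htk⟩ := exists_le_apply_ne_zero_of_linearIndependent ht_indep
  refine ⟨r, ?_⟩
  calc w i ≤ w k := hw hik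
    _ ≤ v (t r k) * w k := le_mul_of_one_le_left (h.pos k).le (hR _ (t r k).2 htk)
    _ ≤ F (x r) := ht r ▸ h.mul_le (R.subtype ∘ t r) k

theorem successiveMin_eq (hR : ∀ r ∈ R, r ≠ 0 → 1 ≤ v r) (h : IsReducedBasis v F B w)
    (hw : Monotone w) (i : Fin N) : successiveMin R F (i + 1) = w i := by
  have mem_of_lt {lam : ℝ} (hlam : w i < lam) : 0 < lam ∧ ∃ x : Fin (i + 1) → Fin N → K,
      (∀ r k, x r k ∈ R) ∧ LinearIndependent K x ∧ ∀ r, F (x r) < lam := by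
    refine ⟨(h.pos i).trans hlam, fun r => (B.map R.subtype).row (r.castLE i.2),
      fun r k => (B _ k).2, ?_, fun r => ?_⟩
    · exact (Matrix.linearIndependent_rows_of_isUnit (isUnit_map_subtype h.isUnit)).comp _
        (Fin.castLE_injective i.2)
    · rw [h.apply_row]
      exact (hw (Fin.le_def.2 (Nat.le_of_lt_succ r.2))).trans_lt hlam
  refine csInf_eq_of_forall_ge_of_forall_gt_exists_lt ⟨w i + 1, mem_of_lt (lt_add_one _)⟩ ?_ ?_
  · rintro lam ⟨-, x, hxR, hx, hlt⟩
    obtain ⟨r, hr⟩ := h.exists_le_apply_of_linearIndependent hR hw i hxR hx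
    exact hr.trans (hlt r).le
  · intro lam hlam
    obtain ⟨mu, hmu, hmu_lt⟩ := exists_between hlam
    exact ⟨mu, mem_of_lt hmu, hmu_lt⟩

end IsReducedBasis

lemma exists_isReducedBasis_monotone (hF : IsDistanceFunction v F)
    (hR : ∀ z, ∃ p ∈ R, v (z - p) < 1)
    (hpwo : (Set.range fun x : Fin N → R => F fun i => x i).IsPWO) :
    ∃ (B : Matrix (Fin N) (Fin N) R) (w : Fin N → ℝ), IsReducedBasis v F B w ∧ Monotone w := by
  obtain ⟨B, w, h⟩ := exists_isReducedBasis hF hR hpwo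
  exact ⟨_, _, h.submatrix (Tuple.sort w), Tuple.monotone_sort w⟩

theorem polar_minima_general {m n : ℕ} (hm : 0 < m) {F : (Fin (m + n) → K) → ℝ}
    (hF : IsDistanceFunction v F) (hR₁ : ∀ r ∈ R, r ≠ 0 → 1 ≤ v r)
    (hR₂ : ∀ z, ∃ p ∈ R, v (z - p) < 1)
    (hpwo : (Set.range fun x : Fin (m + n) → R => F fun i => x i).IsPWO) :
    successiveMin R F m * successiveMin R (polar v F) (n + 1) = 1 := by
  obtain ⟨B, w, h, hw⟩ := exists_isReducedBasis_monotone hF hR₂ hpwo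
  have : Nonempty (Fin (m + n)) := ⟨⟨0, by lia⟩⟩
  have hdual := (h.dual hF.isNonarchimedean_absoluteValue).submatrix Fin.revPerm
  have hdual_mono : Monotone (w⁻¹ ∘ Fin.revPerm) := fun i j hij =>
    inv_anti₀ (h.pos _) (hw (Fin.rev_le_rev.2 hij))
  let i : Fin (m + n) := ⟨m - 1, by lia⟩
  have him : (i : ℕ) + 1 = m := Nat.sub_add_cancel hm
  have hin : (i.rev : ℕ) = n := by simp only [i, Fin.val_rev]; lia
  have hlam := h.successiveMin_eq hR₁ hw i
  have hsig := hdual.successiveMin_eq hR₁ hdual_mono i.rev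
  rw [him] at hlam
  rw [hin] at hsig
  rw [hlam, hsig, Function.comp_apply, Fin.revPerm_apply, Fin.rev_rev, Pi.inv_apply,
    mul_inv_cancel₀ (h.pos i).ne']

end SuccessiveMinima

/-! ### The field of Laurent series -/

section LaurentSeries

lemma one_lt_card : (1 : ℝ) < Fintype.card 𝔽 := Nat.one_lt_cast.2 Fintype.one_lt_card

lemma lnorm_of_ne_zero {x : L 𝔽} (hx : x ≠ 0) : lnorm x = (Fintype.card 𝔽 : ℝ) ^ (-x.order) :=
  if_neg hx

lemma lnorm_nonneg (x : L 𝔽) : 0 ≤ lnorm x := by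
  unfold lnorm
  positivity

lemma lnorm_add_le (x y : L 𝔽) : lnorm (x + y) ≤ max (lnorm x) (lnorm y) := by
  obtain rfl | hx := eq_or_ne x 0
  · simp
  obtain rfl | hy := eq_or_ne y 0
  · simp
  obtain hxy | hxy := eq_or_ne (x + y) 0
  · rw [hxy, lnorm, if_pos rfl]
    exact le_max_of_le_left (lnorm_nonneg x)
  rw [lnorm_of_ne_zero hx, lnorm_of_ne_zero hy, lnorm_of_ne_zero hxy,
    ← (zpow_right_mono₀ one_lt_card.le).map_max, max_neg_neg]
  exact zpow_le_zpow_right₀ one_lt_card.le (neg_le_neg (HahnSeries.min_order_le_order_add hxy))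

variable (𝔽) in
/-- `lnorm` as a bundled absolute value on `ℒ`. -/
def lnormAbv : AbsoluteValue (L 𝔽) ℝ where
  toFun := lnorm
  map_mul' x y := by
    obtain rfl | hx := eq_or_ne x 0
    · simp [lnorm]
    obtain rfl | hy := eq_or_ne y 0
    · simp [lnorm]
    rw [lnorm_of_ne_zero hx, lnorm_of_ne_zero hy, lnorm_of_ne_zero (mul_ne_zero hx hy),
      HahnSeries.order_mul hx hy, neg_add, zpow_add₀ (one_pos.trans one_lt_card).ne']
  nonneg' := lnorm_nonneg
  eq_zero' x := by simp [lnorm, zpow_ne_zero]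
  add_le' x y :=
    (lnorm_add_le x y).trans (max_le_add_of_nonneg (lnorm_nonneg x) (lnorm_nonneg y))

lemma isNonarchimedean_lnormAbv : IsNonarchimedean (lnormAbv 𝔽) := lnorm_add_le

lemma lnormAbv_of_ne_zero {x : L 𝔽} (hx : x ≠ 0) :
    lnormAbv 𝔽 x = (Fintype.card 𝔽 : ℝ) ^ (-x.order) := lnorm_of_ne_zero hx

lemma isPWO_range_lnormAbv_inter_Ici {δ : ℝ} (hδ : 0 < δ) :
    (Set.range (lnormAbv 𝔽) ∩ Set.Ici δ).IsPWO := by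
  obtain ⟨n, hn, -⟩ := exists_mem_Ioc_zpow hδ (one_lt_card (𝔽 := 𝔽))
  have hpwo : ((fun k : ℤ => (Fintype.card 𝔽 : ℝ) ^ k) '' Set.Ici n).IsPWO :=
    bddBelow_Ici.isWF.isPWO.image_of_monotone (zpow_right_mono₀ one_lt_card.le)
  refine hpwo.mono ?_
  rintro _ ⟨⟨x, rfl⟩, hx⟩
  have hx0 : x ≠ 0 := (lnormAbv 𝔽).pos_iff.1 (hδ.trans_le hx)
  rw [lnormAbv_of_ne_zero hx0] at hx ⊢
  exact ⟨-x.order, ((zpow_lt_zpow_iff_right₀ one_lt_card).1 (hn.trans_le hx)).le, rfl⟩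

variable (𝔽) in
/-- The polynomial ring `𝔽[X] ⊆ ℒ`. -/
def polyRing : Subring (L 𝔽) where
  carrier := {x | IsPoly x}
  mul_mem' {x y} hx hy i hi := by
    rw [HahnSeries.coeff_mul]
    refine Finset.sum_eq_zero fun p hp => ?_
    rw [Finset.mem_antidiagonal] at hp
    obtain h | h : 0 < p.1 ∨ 0 < p.2 := by lia
    · rw [hx _ h, zero_mul]
    · rw [hy _ h, mul_zero]
  one_mem' i hi := by rw [HahnSeries.coeff_one, if_neg hi.ne']
  add_mem' hx hy i hi := by rw [HahnSeries.coeff_add, hx i hi, hy i hi, add_zero]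
  zero_mem' _ _ := HahnSeries.coeff_zero
  neg_mem' hx i hi := by rw [HahnSeries.coeff_neg, hx i hi, neg_zero]

lemma one_le_lnormAbv {x : L 𝔽} (hx : x ∈ polyRing 𝔽) (hx0 : x ≠ 0) : 1 ≤ lnormAbv 𝔽 x := by
  have horder : x.order ≤ 0 :=
    not_lt.1 fun h => HahnSeries.coeff_order_eq_zero.not.2 hx0 (hx _ h)
  rw [lnormAbv_of_ne_zero hx0]
  exact one_le_zpow₀ one_lt_card.le (neg_nonneg.2 horder)

lemma exists_mem_polyRing_lnormAbv_sub_lt_one (z : L 𝔽) :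
    ∃ p ∈ polyRing 𝔽, lnormAbv 𝔽 (z - p) < 1 := by
  refine ⟨HahnSeries.truncLT 1 z, fun i hi => HahnSeries.coeff_truncLT_of_le hi z, ?_⟩
  obtain hz | hz := eq_or_ne (z - HahnSeries.truncLT 1 z) 0
  · rw [hz, map_zero]
    exact one_pos
  have horder : 0 < (z - HahnSeries.truncLT 1 z).order := by
    by_contra! h
    refine HahnSeries.coeff_order_eq_zero.not.2 hz ?_
    rw [HahnSeries.coeff_sub, HahnSeries.coeff_truncLT_of_lt (h.trans_lt one_pos), sub_self]
  rw [lnormAbv_of_ne_zero hz]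
  exact zpow_lt_one_of_neg₀ one_lt_card (neg_lt_zero.2 horder)

lemma isDistanceFunction_FA {N : ℕ} {A : Matrix (Fin N) (Fin N) (L 𝔽)} (hA : IsUnit A)
    {c : Fin N → ℝ} (hc : ∀ j, 0 < c j) : IsDistanceFunction (lnormAbv 𝔽) (FA A c) :=
  isDistanceFunction_iSup (φ := A.vecMulLinear) isNonarchimedean_lnormAbv
    (fun j => inv_pos.2 (hc j)) (Matrix.vecMul_injective_iff_isUnit.2 hA)

lemma isPWO_range_FA {N : ℕ} {A : Matrix (Fin N) (Fin N) (L 𝔽)} (hA : IsUnit A)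
    {c : Fin N → ℝ} (hc : ∀ j, 0 < c j) :
    (Set.range fun x : Fin N → polyRing 𝔽 => FA A c fun i => x i).IsPWO :=
  isPWO_range_iSup_vecMul isNonarchimedean_lnormAbv (fun _ => isPWO_range_lnormAbv_inter_Ici)
    (fun _ => one_le_lnormAbv) (fun j => inv_pos.2 (hc j)) hA

end LaurentSeries

/-- **Theorem (Statement 4).** For an invertible `(m+n) × (m+n)` matrix `A` over `ℒ`,
if `λ₁, …, λ_{m+n}` are the successive minima of `F_A` and `σ₁, …, σ_{m+n}` those of
the polar distance function `F_A^*`, then `λ_m σ_{n+1} = 1`. -/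
theorem polar_minima (𝔽 : Type) [Field 𝔽] [Fintype 𝔽] (m n : ℕ)
    (hm : 0 < m) (hn : 0 < n)
    (A : Matrix (Fin (m + n)) (Fin (m + n)) (L 𝔽)) (hA : IsUnit A)
    (c : Fin (m + n) → ℝ) (hc : ∀ j, 0 < c j) :
    succMin (FA A c) m * succMin (FAstar A c) (n + 1) = 1 :=
  polar_minima_general hm (isDistanceFunction_FA hA hc) (fun _ => one_le_lnormAbv)
    exists_mem_polyRing_lnormAbv_sub_lt_one (isPWO_range_FA hA hc)

end FSBad
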